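/- Let F : ℝ^{d×n} → ℝ^{d×n} be defined by T(ζ)_{(i,·)} = ∫₀^{c_i} ∑_{j=1}^d F(ζ_j, c_j) φ_j(s) ds, where c_1,…,c_d are the Chebyshev nodes c_i = ℓ/2 + (ℓ/2)cos((2i−1)π/(2d)) on [0,ℓ], φ_j are the corresponding Lagrange basis polynomials, and suppose ‖F(x,t) − F(y,t)‖_p ≤ L‖x−y‖_p for all x, y and t ∈ [0,ℓ]. Then ‖T(x) − T(y)‖_{∞;p} ≤ 1000 ℓ L ‖x − y‖_{∞;p}, where ‖ζ‖_{∞;p} = max_{i∈[d]} ‖ζ_i‖_p. -/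

import Mathlib

/-- The `ℓ_p` norm of a vector. -/
noncomputable def lpNorm {m : ℕ} (v : Fin m → ℝ) (p : ℝ) : ℝ :=
  (∑ i, |v i| ^ p) ^ (1/p)

/-!
By the triangle inequality and the Lipschitz bound, it suffices to bound `∑ j, |∫ φ_j|`, the
integrals being over `[0, c_i]` and `φ_j` the Lagrange basis. This sum is `∫ P` for the polynomial
`P` of degree `< d` interpolating the signs of the `∫ φ_j`, and `|∫ P|` is at most `∫ |P|` over
`[0, ℓ]`, which rescales to `[-1, 1]`. There the Chebyshev weight `(1 - x²)^(-1/2)` is at least `1`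
and `2 |P| ≤ P² + 1`; as `deg (P² + 1) < 2 d`, Gauss–Chebyshev quadrature is exact, so the weighted
integral of `(P² + 1) / 2` is at most `π`. Undoing the rescaling gives the bound `π / 2 * ℓ`.
-/

section ChebyshevQuadrature

open MeasureTheory Polynomial Polynomial.Chebyshev
open scoped Real

theorem intervalIntegral_le_integral_measureT {f : ℝ → ℝ} (hf : ContinuousOn f (Set.Icc (-1) 1))
    (hf_nonneg : ∀ x ∈ Set.Ioo (-1) 1, 0 ≤ f x) :
    ∫ x in (-1)..1, f x ≤ ∫ x, f x ∂measureT := by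
  rw [← Set.uIcc_of_le (by norm_num)] at hf
  rw [integral_measureT]
  refine intervalIntegral.integral_mono_on_of_le_Ioo (by norm_num) hf.intervalIntegrable
    (intervalIntegrable_sqrt_one_sub_sq_inv.continuousOn_mul hf) fun x hx ↦ ?_
  have one_le_weight : 1 ≤ √(1 - x ^ 2)⁻¹ :=
    Real.one_le_sqrt.2 <| (one_le_inv₀ (by nlinarith [hx.1, hx.2])).2 (by nlinarith [sq_nonneg x])
  exact le_mul_of_one_le_right (hf_nonneg x hx) one_le_weight

theorem integral_eval_measureT_le {P : ℝ[X]} {d : ℕ} {B : ℝ} (hP : P.natDegree < 2 * d)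
    (hP_node : ∀ k < d, P.eval (Real.cos ((2 * k + 1) / (2 * d) * π)) ≤ B) :
    ∫ x, P.eval x ∂measureT ≤ π * B := by
  have hd : d ≠ 0 := by lia
  have hdeg : P.degree < 2 * d := mod_cast degree_le_natDegree.trans_lt (WithBot.coe_lt_coe.2 hP)
  rw [integral_eq_sumZeroes hd hdeg, sumZeroes]
  calc π / d * ∑ k ∈ Finset.range d, P.eval (Real.cos ((2 * k + 1) / (2 * d) * π))
    _ ≤ π / d * ∑ _k ∈ Finset.range d, B := by
      gcongr with k hk
      exact hP_node k (Finset.mem_range.1 hk)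
    _ = π * B := by simp; field

theorem integral_abs_eval_le_pi {P : ℝ[X]} {d : ℕ} (hP : P.natDegree < d)
    (hP_node : ∀ k < d, |P.eval (Real.cos ((2 * k + 1) / (2 * d) * π))| ≤ 1) :
    ∫ x in (-1)..1, |P.eval x| ≤ π := by
  set R : ℝ[X] := C (1 / 2) * (P ^ 2 + 1)
  have eval_R (x : ℝ) : R.eval x = (P.eval x ^ 2 + 1) / 2 := by simp [R]; ring
  have natDegree_R : R.natDegree < 2 * d := by
    have : R.natDegree ≤ 2 * P.natDegree := by simp only [R]; compute_degree
    lia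
  calc ∫ x in (-1)..1, |P.eval x|
    _ ≤ ∫ x, |P.eval x| ∂measureT :=
      intervalIntegral_le_integral_measureT (by fun_prop) fun x _ ↦ abs_nonneg _
    _ ≤ ∫ x, R.eval x ∂measureT := by
      refine integral_mono (integrable_measureT (by fun_prop)) (integrable_measureT (by fun_prop))
        fun x ↦ ?_
      simp only [eval_R]
      linarith [sq_nonneg (|P.eval x| - 1), sq_abs (P.eval x)]
    _ ≤ π * 1 := integral_eval_measureT_le natDegree_R fun k hk ↦ by
      rw [eval_R]
      linarith [(sq_le_one_iff_abs_le_one _).2 (hP_node k hk)]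
    _ = π := mul_one π

end ChebyshevQuadrature

section ChebyshevNodes

open Polynomial
open scoped Real

/-- The `k`-th of the `d` Chebyshev nodes of the interval `[a, b]`, numbered from `k = 0` and
decreasing from `b` towards `a`. -/
noncomputable def chebyshevNode (a b : ℝ) (d k : ℕ) : ℝ :=
  (a + b) / 2 + (b - a) / 2 * Real.cos ((2 * k + 1) * π / (2 * d))

variable {a b : ℝ} {d : ℕ}

theorem chebyshevNode_mem_Icc (hab : a ≤ b) (k : ℕ) : chebyshevNode a b d k ∈ Set.Icc a b := by
  have := Real.neg_one_le_cos ((2 * k + 1) * π / (2 * d))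
  have := Real.cos_le_one ((2 * k + 1) * π / (2 * d))
  constructor <;> unfold chebyshevNode <;> nlinarith

theorem chebyshevNode_injective (hab : a ≠ b) :
    Function.Injective fun i : Fin d ↦ chebyshevNode a b d i := by
  intro i j hij
  have cos_eq : Real.cos ((2 * i + 1) * π / (2 * d)) = Real.cos ((2 * j + 1) * π / (2 * d)) :=
    mul_left_cancel₀ (div_ne_zero (sub_ne_zero.2 hab.symm) two_ne_zero) (add_left_cancel hij)
  have injOn_cos := Multiset.inj_on_of_nodup_map (Chebyshev.roots_T_real_nodup d)
  exact Fin.ext (injOn_cos i (by simp) j (by simp) cos_eq)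

theorem integral_abs_eval_le_of_abs_eval_chebyshevNode_le_one (hab : a ≤ b) {P : ℝ[X]}
    (hP : P.degree < d) (hP_node : ∀ k < d, |P.eval (chebyshevNode a b d k)| ≤ 1) :
    ∫ s in a..b, |P.eval s| ≤ π / 2 * (b - a) := by
  obtain rfl | hP_ne := eq_or_ne P 0
  · simpa using mul_nonneg (by positivity) (sub_nonneg.2 hab)
  set A : ℝ[X] := C ((b - a) / 2) * X + C ((a + b) / 2)
  have eval_comp (s : ℝ) : (P.comp A).eval s = P.eval ((a + b) / 2 + (b - a) / 2 * s) := by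
    simp [A, add_comm]
  have natDegree_comp_lt : (P.comp A).natDegree < d :=
    calc (P.comp A).natDegree
      _ ≤ P.natDegree * A.natDegree := natDegree_comp_le
      _ ≤ P.natDegree := mul_le_of_le_one_right' natDegree_linear_le
      _ < d := (natDegree_lt_iff_degree_lt hP_ne).2 hP
  have comp_node : ∀ k < d, |(P.comp A).eval (Real.cos ((2 * k + 1) / (2 * d) * π))| ≤ 1 := by
    intro k hk
    rw [eval_comp, div_mul_eq_mul_div (2 * (k : ℝ) + 1)]
    exact hP_node k hk
  calc ∫ s in a..b, |P.eval s|
    _ = (b - a) / 2 * ∫ s in (-1)..1, |(P.comp A).eval s| := by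
      simp_rw [eval_comp]
      rw [intervalIntegral.mul_integral_comp_add_mul (f := fun s ↦ |P.eval s|)]
      congr 1 <;> ring
    _ ≤ (b - a) / 2 * π := by
      have := sub_nonneg.2 hab
      gcongr
      exact integral_abs_eval_le_pi natDegree_comp_lt comp_node
    _ = π / 2 * (b - a) := by ring

end ChebyshevNodes

section LagrangeWeights

open Polynomial
open scoped Real

theorem sum_abs_apply_lagrangeBasis_le {K κ : Type*} [Field K] [LinearOrder K]
    [IsStrictOrderedRing K] [DecidableEq κ] {s : Finset κ} {c : κ → K}
    (hc : Set.InjOn c s) (φ : K[X] →ₗ[K] K) {B : K}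
    (hφ : ∀ P : K[X], P.degree < s.card → (∀ j ∈ s, |P.eval (c j)| ≤ 1) → φ P ≤ B) :
    ∑ j ∈ s, |φ (Lagrange.basis s c j)| ≤ B := by
  set σ : κ → K := fun j ↦ SignType.sign (φ (Lagrange.basis s c j))
  have abs_σ_le (j : κ) : |σ j| ≤ 1 := by
    cases h : SignType.sign (φ (Lagrange.basis s c j)) <;> simp [σ, h]
  calc ∑ j ∈ s, |φ (Lagrange.basis s c j)|
    _ = φ (Lagrange.interpolate s c σ) := by
      simp [Lagrange.interpolate_apply, C_mul', σ]
    _ ≤ B := hφ _ (Lagrange.degree_interpolate_lt σ hc) fun j hj ↦ by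
      rw [Lagrange.eval_interpolate_at_node σ hc hj]
      exact abs_σ_le j

theorem eval_lagrangeBasis {K κ : Type*} [Field K] [DecidableEq κ] (s : Finset κ) (c : κ → K)
    (j : κ) (t : K) :
    (Lagrange.basis s c j).eval t = ∏ k ∈ s.erase j, (t - c k) / (c j - c k) := by
  simp [Lagrange.basis, Lagrange.basisDivisor, eval_prod, div_eq_inv_mul]

/-- Integration of polynomials over `a..b`, as a linear functional. -/
noncomputable def polynomialIntegral (a b : ℝ) : ℝ[X] →ₗ[ℝ] ℝ where
  toFun P := ∫ s in a..b, P.eval s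
  map_add' P Q := by
    simp only [eval_add]
    exact intervalIntegral.integral_add (P.continuous.intervalIntegrable a b)
      (Q.continuous.intervalIntegrable a b)
  map_smul' r P := by simp

theorem sum_abs_polynomialIntegral_lagrangeBasis_chebyshevNode_le {a b : ℝ} (hab : a < b) {d : ℕ}
    {t : ℝ} (ht : t ∈ Set.Icc a b) :
    ∑ j, |polynomialIntegral a t
      (Lagrange.basis Finset.univ (fun i : Fin d ↦ chebyshevNode a b d i) j)| ≤
        π / 2 * (b - a) := by
  refine sum_abs_apply_lagrangeBasis_le (chebyshevNode_injective hab.ne).injOn _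
    fun P hP hP_node ↦ ?_
  rw [Finset.card_fin] at hP
  calc ∫ s in a..t, P.eval s
    _ ≤ ∫ s in a..t, |P.eval s| := (le_abs_self _).trans
      (intervalIntegral.abs_integral_le_integral_abs ht.1)
    _ ≤ ∫ s in a..b, |P.eval s| :=
      intervalIntegral.integral_mono_interval le_rfl ht.1 ht.2 (.of_forall fun _ ↦ abs_nonneg _)
        (P.continuous.abs.intervalIntegrable a b)
    _ ≤ π / 2 * (b - a) := integral_abs_eval_le_of_abs_eval_chebyshevNode_le_one hab.le hP
      fun k hk ↦ hP_node ⟨k, hk⟩ (Finset.mem_univ _)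

end LagrangeWeights

section Collocation

variable {κ ι : Type*} [Fintype κ] [DecidableEq κ]

/-- One Picard step of the collocation method for `dx/dt = F(x, t)` with initial time `t₀` and nodes
`c`: given the values `ζ j` of a trajectory at the nodes, the vector field along it is replaced by
its Lagrange interpolant, which is integrated coordinatewise from `t₀` to each node. The initial
value of `x` is not added. -/
noncomputable def collocationOp (F : (ι → ℝ) → ℝ → ι → ℝ) (t₀ : ℝ) (c : κ → ℝ) (ζ : κ → ι → ℝ) :
    κ → ι → ℝ :=
  fun i k ↦ ∫ s in t₀..c i, ∑ j, F (ζ j) (c j) k * (Lagrange.basis Finset.univ c j).eval s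

theorem collocationOp_eq_sum_smul (F : (ι → ℝ) → ℝ → ι → ℝ) (t₀ : ℝ) (c : κ → ℝ) (ζ : κ → ι → ℝ)
    (i : κ) :
    collocationOp F t₀ c ζ i = ∑ j,
      polynomialIntegral t₀ (c i) (Lagrange.basis Finset.univ c j) • F (ζ j) (c j) := by
  ext k
  rw [collocationOp, intervalIntegral.integral_finsetSum fun j _ ↦
    (Continuous.intervalIntegrable (by fun_prop) _ _)]
  simp [polynomialIntegral, mul_comm]

theorem seminorm_collocationOp_sub_le (q : Seminorm ℝ (ι → ℝ)) (F : (ι → ℝ) → ℝ → ι → ℝ)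
    (t₀ : ℝ) (c : κ → ℝ) (x y : κ → ι → ℝ) (i : κ) :
    q (collocationOp F t₀ c x i - collocationOp F t₀ c y i) ≤
      ∑ j, |polynomialIntegral t₀ (c i) (Lagrange.basis Finset.univ c j)| *
        q (F (x j) (c j) - F (y j) (c j)) := by
  simp_rw [collocationOp_eq_sum_smul, ← Finset.sum_sub_distrib, ← smul_sub, ← Real.norm_eq_abs,
    ← map_smul_eq_mul q]
  exact Finset.le_sum_of_subadditive q (map_zero q).le (map_add_le_add q) _ _

/-- The `ℓ_p` norm `lpNorm · p`, `1 ≤ p`, as a seminorm; the triangle inequality is Minkowski's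
inequality. -/
noncomputable def lpSeminorm (m : ℕ) {p : ℝ} (hp : 1 ≤ p) : Seminorm ℝ (Fin m → ℝ) :=
  Seminorm.of (lpNorm · p) (fun v w ↦ Real.Lp_add_le Finset.univ v w hp) fun a v ↦ by
    simp only [lpNorm, Pi.smul_apply, smul_eq_mul, abs_mul, Real.norm_eq_abs]
    simp_rw [Real.mul_rpow (abs_nonneg _) (abs_nonneg _)]
    rw [← Finset.mul_sum, Real.mul_rpow (by positivity) (by positivity),
      ← Real.rpow_mul (abs_nonneg _), mul_one_div_cancel (by positivity), Real.rpow_one]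

open scoped Real in
theorem collocation_contraction_general {d : ℕ} (hd : 1 ≤ d) (q : Seminorm ℝ (ι → ℝ)) {a b L : ℝ}
    (hab : a < b) (hL : 0 ≤ L) {F : (ι → ℝ) → ℝ → ι → ℝ}
    (hF : ∀ x y : ι → ℝ, ∀ t ∈ Set.Icc a b, q (F x t - F y t) ≤ L * q (x - y))
    {c : Fin d → ℝ} (hc : ∀ i, c i = chebyshevNode a b d i) (x y : Fin d → ι → ℝ) :
    ⨆ i, q (collocationOp F a c x i - collocationOp F a c y i) ≤
      π / 2 * (b - a) * L * ⨆ i, q (x i - y i) := by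
  obtain rfl := funext hc
  have : Nonempty (Fin d) := Fin.pos_iff_nonempty.1 hd
  have node_mem (j : Fin d) := chebyshevNode_mem_Icc (d := d) hab.le j
  set M := ⨆ i, q (x i - y i)
  have hM : 0 ≤ M := Real.iSup_nonneg fun i ↦ apply_nonneg q _
  have le_M (j : Fin d) : q (x j - y j) ≤ M :=
    le_ciSup (f := fun i ↦ q (x i - y i)) (Set.finite_range _).bddAbove j
  refine ciSup_le fun i ↦ (seminorm_collocationOp_sub_le q F a _ x y i).trans ?_
  have lipschitz_node (j : Fin d) :
      q (F (x j) (chebyshevNode a b d j) - F (y j) (chebyshevNode a b d j)) ≤ L * M :=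
    (hF _ _ _ (node_mem j)).trans (by gcongr; exact le_M j)
  calc _
    _ ≤ ∑ j, |polynomialIntegral a _ (Lagrange.basis Finset.univ _ j)| * (L * M) := by
      gcongr with j
      exact lipschitz_node j
    _ ≤ π / 2 * (b - a) * (L * M) := by
      rw [← Finset.sum_mul]
      gcongr
      exact sum_abs_polynomialIntegral_lagrangeBasis_chebyshevNode_le hab (node_mem i)
    _ = π / 2 * (b - a) * L * M := by ring

end Collocation

/-- The collocation operator `T` on Chebyshev nodes is a `1000ℓL`-contraction in the
`‖·‖_{∞;p}` norm when `F` is `L`-Lipschitz in `‖·‖_p`. -/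
theorem collocation_contraction {n d : ℕ} (hd : 1 ≤ d) (ℓ L p : ℝ)
    (hℓ : 0 < ℓ) (hL : 0 ≤ L) (hp : 1 ≤ p)
    (F : (Fin n → ℝ) → ℝ → (Fin n → ℝ))
    (hF : ∀ x y : Fin n → ℝ, ∀ t ∈ Set.Icc (0:ℝ) ℓ,
      lpNorm (F x t - F y t) p ≤ L * lpNorm (x - y) p)
    (c : Fin d → ℝ)
    (hc : ∀ i : Fin d, c i = ℓ/2 + ℓ/2 * Real.cos ((2*((i:ℕ):ℝ)+1) * Real.pi / (2*(d:ℝ))))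
    (x y : Fin d → Fin n → ℝ) :
    let T : (Fin d → Fin n → ℝ) → Fin d → Fin n → ℝ := fun ζ i k =>
      ∫ s in (0:ℝ)..(c i), ∑ j, F (ζ j) (c j) k *
        ∏ j' ∈ Finset.univ.erase j, (s - c j') / (c j - c j')
    (⨆ i, lpNorm (T x i - T y i) p) ≤ 1000 * ℓ * L * ⨆ i, lpNorm (x i - y i) p := by
  simp_rw [← eval_lagrangeBasis]
  have constant_le : Real.pi / 2 * (ℓ - 0) * L ≤ 1000 * ℓ * L := by
    gcongr <;> linarith [Real.pi_le_four]
  exact (collocation_contraction_general hd (lpSeminorm n hp) hℓ hL hF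
    (by simpa [chebyshevNode] using hc) x y).trans <| mul_le_mul_of_nonneg_right constant_le <|
      Real.iSup_nonneg fun i ↦ apply_nonneg (lpSeminorm n hp) (x i - y i)
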